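/- arXiv:1301.4585 — 7 statements merged into one kernel-verified Lean document; each statement's English description precedes it below -/
import Mathlib

section
/- Let G be a countable discrete group. Then the following are equivalent: (a) G admits a Følner sequence and G is residually finite; (b) there exist a Følner sequence (F_n) for G, a sequence of normal subgroups L_n of G of finite index with ⋂_{n≥1} L_n = {1}, and a sequence of finite subsets K_n ⊆ G with F_n ⊆ K_n, such that for every n ≥ 1 every element g ∈ G can be written uniquely as g = kl with k ∈ K_n and l ∈ L_n. -/
/-!
From (a) to (b) the given Følner sequence `F` is kept. Residual finiteness yields, for each `n`, a
finite index normal subgroup `L n` meeting `(F n)⁻¹ * F n` only in `1`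
(`IsResiduallyFinite.exists_disjoint`). The elements of `F n` then lie in pairwise distinct cosets
of `L n`, so `F n` extends to a transversal `K n` (`exists_isTiling_of_injOn`). The subgroups
`L n` intersect trivially because both `1` and any given `g` eventually belong to `F n`, whence
`g = 1⁻¹ * g` is eventually excluded from `L n` unless `g = 1`. Conversely, a trivial intersection
of finite index normal subgroups is exactly what separates points.
-/

open Filter
open scoped symmDiff

/-- A Følner sequence for a countable discrete group `G`: a sequence of finite nonempty
subsets `F n ⊆ G` such that every element of `G` lies in `F n` for all sufficiently large `n`,
and `|F n Δ F n • s| / |F n| → 0` for every `s ∈ G`. -/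
def IsFolnerSeq {G : Type*} [Group G] [DecidableEq G] (F : ℕ → Finset G) : Prop :=
  (∀ n, (F n).Nonempty) ∧
  (∀ g : G, ∀ᶠ n in atTop, g ∈ F n) ∧
  (∀ s : G, Tendsto
    (fun n => ((((F n) ∆ ((F n).image (· * s))).card : ℝ) / ((F n).card : ℝ)))
    atTop (nhds 0))

/-- `G` is residually finite: finite index normal subgroups separate points. -/
def IsResiduallyFinite (G : Type*) [Group G] : Prop :=
  ∀ g : G, g ≠ 1 → ∃ N : Subgroup G, N.Normal ∧ N.FiniteIndex ∧ g ∉ N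

/-- `G = K L` is a tiling: every element of `G` is uniquely a product of an element of `K`
and an element of `L`. -/
def IsTiling {G : Type*} [Group G] (K : Finset G) (L : Subgroup G) : Prop :=
  ∀ g : G, ∃! kl : G × G, kl.1 ∈ K ∧ kl.2 ∈ L ∧ g = kl.1 * kl.2

/-- Residual finiteness separates `1` from a finite set at once: finite intersections of normal
subgroups of finite index are again normal of finite index. -/
lemma IsResiduallyFinite.exists_disjoint {G : Type*} [Group G] [DecidableEq G]
    (h : IsResiduallyFinite G) (S : Finset G) :
    ∃ N : Subgroup G, N.Normal ∧ N.FiniteIndex ∧ ∀ g ∈ S, g ∈ N → g = 1 := by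
  induction S using Finset.induction_on with
  | empty => exact ⟨⊤, inferInstance, inferInstance, by simp⟩
  | insert a S _ ih =>
    obtain ⟨N, hN, hf, hS⟩ := ih
    by_cases ha : a = 1
    · refine ⟨N, hN, hf, fun g hg hgN => ?_⟩
      rcases Finset.mem_insert.1 hg with rfl | hg
      · exact ha
      · exact hS g hg hgN
    · obtain ⟨M, hM, hMf, haM⟩ := h a ha
      refine ⟨M ⊓ N, inferInstance, inferInstance, fun g hg hgN => ?_⟩
      rcases Finset.mem_insert.1 hg with rfl | hg
      · exact absurd hgN.1 haM
      · exact hS g hg hgN.2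

/-- A finite set of representatives of distinct left cosets of a finite index subgroup extends to
a full left transversal. -/
lemma exists_isTiling_of_injOn {G : Type*} [Group G] [DecidableEq G] (L : Subgroup G)
    [L.FiniteIndex] (F : Finset G) (hF : ∀ a ∈ F, ∀ b ∈ F, a⁻¹ * b ∈ L → a = b) :
    ∃ K : Finset G, F ⊆ K ∧ IsTiling K L := by
  classical
  have key : ∀ q : G ⧸ L, ∃ g : G, (g : G ⧸ L) = q ∧ ∀ f ∈ F, (f : G ⧸ L) = q → f = g := by
    intro q
    by_cases hq : ∃ f ∈ F, (f : G ⧸ L) = q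
    · obtain ⟨f, hf, rfl⟩ := hq
      exact ⟨f, rfl, fun f' hf' h => hF f' hf' f hf (QuotientGroup.eq.1 h)⟩
    · exact ⟨q.out, QuotientGroup.out_eq' q, fun f hf h => absurd ⟨f, hf, h⟩ hq⟩
  choose σ hσ hσF using key
  have : Fintype (G ⧸ L) := Fintype.ofFinite _
  refine ⟨Finset.univ.image σ, fun f hf => ?_, fun g => ?_⟩
  · exact Finset.mem_image.2 ⟨(f : G ⧸ L), Finset.mem_univ _, (hσF _ f hf rfl).symm⟩
  · refine ⟨(σ g, (σ g)⁻¹ * g), ⟨Finset.mem_image_of_mem _ (Finset.mem_univ _),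
      QuotientGroup.eq.1 (hσ g), by simp⟩, ?_⟩
    rintro ⟨k, l⟩ ⟨hk, hl, rfl⟩
    obtain ⟨q, -, rfl⟩ := Finset.mem_image.1 hk
    have hq : ((σ q * l : G) : G ⧸ L) = q := by
      rw [QuotientGroup.mk_mul_of_mem _ hl, hσ]
    simp [hq]

theorem folner_residuallyFinite_iff_tilings
    (G : Type*) [Group G] [Countable G] [DecidableEq G] :
    ((∃ F : ℕ → Finset G, IsFolnerSeq F) ∧ IsResiduallyFinite G) ↔
    (∃ (F K : ℕ → Finset G) (L : ℕ → Subgroup G),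
      IsFolnerSeq F ∧
      (∀ n, (L n).Normal) ∧
      (∀ n, (L n).FiniteIndex) ∧
      (⨅ n, L n) = ⊥ ∧
      (∀ n, F n ⊆ K n) ∧
      (∀ n, IsTiling (K n) (L n))) := by
  constructor
  · rintro ⟨⟨F, hF⟩, hG⟩
    choose L hN hf hL using fun n =>
      hG.exists_disjoint ((F n ×ˢ F n).image fun p => p.1⁻¹ * p.2)
    have hsep : ∀ n, ∀ a ∈ F n, ∀ b ∈ F n, a⁻¹ * b ∈ L n → a = b := fun n a ha b hb h =>
      inv_mul_eq_one.1 (hL n _ (Finset.mem_image.2 ⟨(a, b), Finset.mk_mem_product ha hb, rfl⟩) h)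
    choose K hFK hK using fun n => exists_isTiling_of_injOn (L n) (F n) (hsep n)
    refine ⟨F, K, L, hF, hN, hf, ?_, hFK, hK⟩
    refine (Subgroup.eq_bot_iff_forall _).2 fun g hg => ?_
    obtain ⟨n, h1, hgn⟩ := ((hF.2.1 1).and (hF.2.1 g)).exists
    exact (hsep n 1 h1 g hgn (by simpa using Subgroup.mem_iInf.1 hg n)).symm
  · rintro ⟨F, K, L, hF, hN, hf, hL, -, -⟩
    refine ⟨⟨F, hF⟩, fun g hg => ?_⟩
    by_contra! h
    refine hg (Subgroup.mem_bot.1 (hL ▸ Subgroup.mem_iInf.2 fun n => ?_))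
    exact h (L n) (hN n) (hf n)
end

section
/- The family {ξ_{yL} : y ∈ K} is orthonormal in ℓ²(G): for every y ∈ K, ‖ξ_{yL}‖ = 1, and for all y, z ∈ K with yL ≠ zL, the inner product ⟨ξ_{yL}, ξ_{zL}⟩ = 0. -/
/-!
Distinct left cosets are disjoint, so `ξ y` and `ξ z` have disjoint supports and are orthogonal.

For the norm, `|F| · ‖ξ y‖²` counts the pairs `(f, x)` with `f ∈ F`, `x ∈ yL` and `f x ∈ K`.
Since `f x` ranges over the left coset `f y L`, which meets `K` in exactly one point, every `f ∈ F`
contributes exactly one pair, so the count is `|F|`.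
-/

/-- For every `f` there is exactly one `x ∈ yL` with `f x ∈ K`, because `K` is a transversal of the
left cosets of `L`. -/
lemma tiling_existsUnique {G : Type*} [Group G] (L : Subgroup G) (K : Finset G)
    (htiling : ∀ g : G, ∃! kl : G × G, kl.1 ∈ K ∧ kl.2 ∈ L ∧ g = kl.1 * kl.2) (y f : G) :
    ∃ x₀ : G, ∀ x : G, (y⁻¹ * x ∈ L ∧ f * x ∈ K) ↔ x = x₀ := by
  obtain ⟨⟨k, l⟩, ⟨hk, hl, hfy⟩, huniq⟩ := htiling (f * y)
  simp only at hk hl hfy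
  refine ⟨f⁻¹ * k, fun x => ⟨fun ⟨hx, hfx⟩ => ?_, ?_⟩⟩
  · have h := huniq (f * x, x⁻¹ * y) ⟨hfx, by simpa using L.inv_mem hx, by simp [mul_assoc]⟩
    exact eq_inv_mul_of_mul_eq (congrArg Prod.fst h)
  · rintro rfl
    refine ⟨?_, by simpa using hk⟩
    have h : y⁻¹ * (f⁻¹ * k) = l⁻¹ := by
      rw [← mul_assoc, ← mul_inv_rev, hfy]
      simp
    rw [h]
    exact L.inv_mem hl

lemma card_inter_image_mul_right {G : Type*} [Group G] [DecidableEq G] (K F : Finset G) (x : G) :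
    (K ∩ F.image (· * x)).card = (F.filter (fun f => f * x ∈ K)).card := by
  rw [← Finset.card_image_of_injective (F.filter (fun f => f * x ∈ K)) (mul_left_injective x)]
  congr 1
  ext g
  simp only [Finset.mem_inter, Finset.mem_image, Finset.mem_filter]
  grind

open scoped InnerProductSpace Pointwise Classical

/-- Given a tiling `G = K L` and a finite nonempty set `F ⊆ G`, with
`φ(x) = √(|K ∩ Fx| / |F|)` and `ξ_{gL}(x) = φ(x)` for `x ∈ gL`, `0` otherwise,
the family `{ξ_{yL} : y ∈ K}` is orthonormal in `ℓ²(G)`. -/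
theorem xi_orthonormal
    {G : Type*} [Group G] [DecidableEq G] (L : Subgroup G) (K : Finset G)
    (htiling : ∀ g : G, ∃! kl : G × G, kl.1 ∈ K ∧ kl.2 ∈ L ∧ g = kl.1 * kl.2)
    (F : Finset G) (hF : F.Nonempty)
    (φ : G → ℝ)
    (hφ : ∀ x : G, φ x = Real.sqrt (((K ∩ F.image (· * x)).card : ℝ) / (F.card : ℝ)))
    (ξ : G → lp (fun _ : G => ℂ) 2)
    (hξ : ∀ g x : G, ξ g x = if g⁻¹ * x ∈ L then (φ x : ℂ) else 0) :
    (∀ y ∈ K, ‖ξ y‖ = 1) ∧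
    (∀ y ∈ K, ∀ z ∈ K, (y : G) • (L : Set G) ≠ z • (L : Set G) → ⟪ξ y, ξ z⟫_ℂ = 0) := by
  refine ⟨fun y _ => ?_, fun y _ z _ hyz => ?_⟩
  · choose x₀ hx₀ using tiling_existsUnique L K htiling y
    have hF0 : (F.card : ℝ) ≠ 0 := by exact_mod_cast hF.card_pos.ne'
    -- `|ξ y x|²` is `1 / |F|` times the number of `f ∈ F` whose unique point `x₀ f` is `x`.
    have hpt : ∀ x, ‖ξ y x‖ ^ 2 = ∑ f ∈ F, if x = x₀ f then (1 / F.card : ℝ) else 0 := by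
      intro x
      simp only [← hx₀, hξ]
      by_cases hx : y⁻¹ * x ∈ L
      · simp only [hx, if_true, true_and]
        rw [Complex.norm_real, Real.norm_eq_abs, sq_abs, hφ, Real.sq_sqrt (by positivity),
          ← Finset.sum_filter, Finset.sum_const, nsmul_eq_mul, mul_one_div]
        congr 2
        convert card_inter_image_mul_right K F x
      · simp [hx]
    have hsum : HasSum (fun x => ‖ξ y x‖ ^ 2) (∑ f ∈ F, (1 / F.card : ℝ)) := by
      simp only [hpt]
      exact hasSum_sum fun f _ => hasSum_ite_eq (x₀ f) _
    have hnorm := lp.norm_rpow_eq_tsum (p := 2) (by norm_num) (ξ y)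
    simp only [ENNReal.toReal_ofNat, Real.rpow_ofNat] at hnorm
    rw [hsum.tsum_eq, Finset.sum_const, nsmul_eq_mul, mul_one_div_cancel hF0] at hnorm
    exact (pow_eq_one_iff_of_nonneg (norm_nonneg _) two_ne_zero).1 hnorm
  · rw [lp.inner_eq_tsum]
    convert tsum_zero with x
    rw [hξ, hξ]
    by_cases h₁ : y⁻¹ * x ∈ L
    · by_cases h₂ : z⁻¹ * x ∈ L
      · refine absurd ((leftCoset_eq_iff L).2 ?_) hyz
        simpa [mul_assoc] using L.mul_mem h₁ (L.inv_mem h₂)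
      · simp [h₂]
    · simp [h₁]
end

section
/- For every s ∈ G and y ∈ K one has λ(s) ξ_{yL} = ξ_{syL} + Σ_{x ∈ yL} (φ(x) − φ(sx)) δ_{sx} in ℓ²(G), and moreover Σ_{x ∈ yL} |φ(x) − φ(sx)|² ≤ |F Δ Fs| / |F|, where Δ denotes symmetric difference. -/
/-!
The first identity is checked coordinatewise: at `z`, both sides depend only on whether
`s⁻¹ * z` lies in `yL`, and in the sum only the term `x = s⁻¹ * z` contributes. The sum is
effectively finite because `φ` vanishes off the finite set `F⁻¹ K`.

For the inequality, `|√a - √b|² ≤ |a - b|` reduces the claim to bounding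
`∑ x ∈ yL, |K ∩ (F ∆ Fs)x|` by `|F ∆ Fs|` (`card_inter_le_add`, `abs_phi_sub_sq_le`). Counting the
pairs `(d, x)` with `d * x ∈ K` the other way round, each `d ∈ F ∆ Fs` contributes at most one
`x ∈ yL`, since distinct points of a left coset of `L` cannot both lie in the transversal `K`
(`sum_card_inter_le`).
-/

open scoped InnerProductSpace Pointwise Classical symmDiff

theorem abs_sqrt_sub_sqrt_sq_le {a b : ℝ} (ha : 0 ≤ a) (hb : 0 ≤ b) :
    |Real.sqrt a - Real.sqrt b| ^ 2 ≤ |a - b| := by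
  have h1 := Real.sq_sqrt ha
  have h2 := Real.sq_sqrt hb
  have h3 := Real.sqrt_nonneg a
  have h4 := Real.sqrt_nonneg b
  have hab : |a - b| = |Real.sqrt a - Real.sqrt b| * (Real.sqrt a + Real.sqrt b) := by
    rw [← abs_of_nonneg (add_nonneg h3 h4), ← abs_mul]
    congr 1
    nlinarith
  rw [hab, sq]
  refine mul_le_mul_of_nonneg_left ?_ (abs_nonneg _)
  rw [abs_le]
  constructor <;> linarith

theorem card_inter_le_add {G : Type*} (K A B D : Finset G)
    (h : ∀ a ∈ A, a ∈ B ∨ a ∈ D) : (K ∩ A).card ≤ (K ∩ B).card + (K ∩ D).card := by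
  refine (Finset.card_le_card ?_).trans (Finset.card_union_le _ _)
  intro a ha
  simp only [Finset.mem_inter, Finset.mem_union] at ha ⊢
  have := h a ha.2
  tauto

/-- The pointwise bound `|φ x - φ (s x)|² ≤ |K ∩ (F ∆ Fs)x| / |F|`. -/
theorem abs_phi_sub_sq_le {G : Type*} [Group G] (K F : Finset G) (φ : G → ℝ)
    (hφ : ∀ x : G, φ x = Real.sqrt (((K ∩ F.image (· * x)).card : ℝ) / (F.card : ℝ)))
    (s x : G) :
    |φ x - φ (s * x)| ^ 2 ≤
      ((K ∩ (F ∆ F.image (· * s)).image (· * x)).card : ℝ) / (F.card : ℝ) := by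
  rw [hφ, hφ]
  refine (abs_sqrt_sub_sqrt_sq_le (by positivity) (by positivity)).trans ?_
  rw [← sub_div, abs_div, Nat.abs_cast]
  gcongr
  have h1 := card_inter_le_add K (F.image (· * x)) (F.image (· * (s * x)))
    ((F ∆ F.image (· * s)).image (· * x)) (by
      intro a ha
      obtain ⟨f, hf, rfl⟩ := Finset.mem_image.1 ha
      by_cases h : f ∈ F.image (· * s)
      · obtain ⟨g, hg, rfl⟩ := Finset.mem_image.1 h
        exact Or.inl (Finset.mem_image.2 ⟨g, hg, by simp only [mul_assoc]⟩)
      · exact Or.inr (Finset.mem_image_of_mem _ (Finset.mem_symmDiff.2 (Or.inl ⟨hf, h⟩))))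
  have h2 := card_inter_le_add K (F.image (· * (s * x))) (F.image (· * x))
    ((F ∆ F.image (· * s)).image (· * x)) (by
      intro a ha
      obtain ⟨f, hf, rfl⟩ := Finset.mem_image.1 ha
      by_cases h : f * s ∈ F
      · exact Or.inl (Finset.mem_image.2 ⟨f * s, h, by simp only [mul_assoc]⟩)
      · exact Or.inr (Finset.mem_image.2 ⟨f * s, Finset.mem_symmDiff.2
          (Or.inr ⟨Finset.mem_image_of_mem _ hf, h⟩), by simp only [mul_assoc]⟩))
  rw [abs_le]
  have h1' : ((K ∩ F.image (· * x)).card : ℝ) ≤ (K ∩ F.image (· * (s * x))).card +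
    (K ∩ (F ∆ F.image (· * s)).image (· * x)).card := by exact_mod_cast h1
  have h2' : ((K ∩ F.image (· * (s * x))).card : ℝ) ≤ (K ∩ F.image (· * x)).card +
    (K ∩ (F ∆ F.image (· * s)).image (· * x)).card := by exact_mod_cast h2
  constructor <;> linarith

/-- Double counting of the pairs `(d, x)` with `d * x ∈ K`: for each `d ∈ D` there is at most one
such `x` in the coset `yL`, by uniqueness in the tiling. -/
theorem sum_card_inter_le {G : Type*} [Group G] (L : Subgroup G) (K : Finset G)
    (htiling : ∀ g : G, ∃! kl : G × G, kl.1 ∈ K ∧ kl.2 ∈ L ∧ g = kl.1 * kl.2)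
    (D : Finset G) (y : G) (S : Finset (y • (L : Set G) : Set G)) :
    ∑ x ∈ S, (K ∩ D.image (· * (x : G))).card ≤ D.card := by
  have h1 : ∀ x : (y • (L : Set G) : Set G), (K ∩ D.image (· * (x : G))).card ≤
      ∑ d ∈ D, if d * (x : G) ∈ K then 1 else 0 := by
    intro x
    rw [← Finset.card_filter]
    refine (Finset.card_le_card ?_).trans (Finset.card_image_le (f := (· * (x : G))))
    intro a ha
    obtain ⟨haK, ha⟩ := Finset.mem_inter.1 ha
    obtain ⟨d, hd, rfl⟩ := Finset.mem_image.1 ha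
    exact Finset.mem_image_of_mem _ (Finset.mem_filter.2 ⟨hd, haK⟩)
  refine (Finset.sum_le_sum fun x _ => h1 x).trans ?_
  rw [Finset.sum_comm, Finset.card_eq_sum_ones]
  refine Finset.sum_le_sum fun d _ => ?_
  rw [← Finset.card_filter, Finset.card_le_one]
  intro a ha b hb
  have haK := (Finset.mem_filter.1 ha).2
  have hbK := (Finset.mem_filter.1 hb).2
  obtain ⟨a, ha'⟩ := a
  obtain ⟨b, hb'⟩ := b
  rw [Set.mem_smul_set_iff_inv_smul_mem, smul_eq_mul, SetLike.mem_coe] at ha' hb'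
  have hl : a⁻¹ * b ∈ L := by
    have := L.mul_mem (L.inv_mem ha') hb'
    simpa [mul_assoc] using this
  -- `d * b` has the two decompositions `(d * b) * 1` and `(d * a) * (a⁻¹ * b)`.
  have := (htiling (d * b)).unique (y₁ := (d * b, 1)) (y₂ := (d * a, a⁻¹ * b))
    ⟨hbK, L.one_mem, by simp⟩ ⟨haK, hl, by simp [mul_assoc]⟩
  have := congrArg Prod.fst this
  exact Subtype.ext (mul_left_cancel this).symm

theorem finite_support_phi {G : Type*} [Group G] (K F : Finset G) (φ : G → ℝ)
    (hφ : ∀ x : G, φ x = Real.sqrt (((K ∩ F.image (· * x)).card : ℝ) / (F.card : ℝ))) :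
    (Function.support φ).Finite := by
  refine (Finset.finite_toSet ((F ×ˢ K).image fun p => p.1⁻¹ * p.2)).subset ?_
  intro x hx
  have hne : (K ∩ F.image (· * x)).Nonempty := by
    rw [Finset.nonempty_iff_ne_empty]
    intro h
    exact hx (by rw [hφ, h]; simp)
  obtain ⟨a, ha⟩ := hne
  obtain ⟨haK, ha⟩ := Finset.mem_inter.1 ha
  obtain ⟨f, hf, rfl⟩ := Finset.mem_image.1 ha
  exact Finset.mem_coe.2 (Finset.mem_image.2
    ⟨(f, f * x), Finset.mem_product.2 ⟨hf, haK⟩, by simp⟩)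

/-- Given a tiling `G = K L`, a finite nonempty `F ⊆ G`, `φ(x) = √(|K ∩ Fx| / |F|)`,
`ξ_{gL}(x) = φ(x)` for `x ∈ gL` and `0` otherwise, the left regular representation `λ` and
the standard basis vectors `δ`, one has
`λ(s) ξ_{yL} = ξ_{syL} + Σ_{x ∈ yL} (φ(x) − φ(sx)) δ_{sx}` and
`Σ_{x ∈ yL} |φ(x) − φ(sx)|² ≤ |F Δ Fs| / |F|`. -/
theorem lambda_xi_eq
    {G : Type*} [Group G] (L : Subgroup G) (K : Finset G)
    (htiling : ∀ g : G, ∃! kl : G × G, kl.1 ∈ K ∧ kl.2 ∈ L ∧ g = kl.1 * kl.2)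
    (F : Finset G) (hF : F.Nonempty)
    (φ : G → ℝ)
    (hφ : ∀ x : G, φ x = Real.sqrt (((K ∩ F.image (· * x)).card : ℝ) / (F.card : ℝ)))
    (ξ : G → lp (fun _ : G => ℂ) 2)
    (hξ : ∀ g x : G, ξ g x = if g⁻¹ * x ∈ L then (φ x : ℂ) else 0)
    (lam : G → (lp (fun _ : G => ℂ) 2 →L[ℂ] lp (fun _ : G => ℂ) 2))
    (hlam : ∀ (s : G) (η : lp (fun _ : G => ℂ) 2) (x : G), lam s η x = η (s⁻¹ * x))
    (δ : G → lp (fun _ : G => ℂ) 2)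
    (hδ : ∀ x z : G, δ x z = if z = x then 1 else 0)
    (s : G) (y : G) (hy : y ∈ K) :
    lam s (ξ y) =
      ξ (s * y) + ∑' x : ((y : G) • (L : Set G) : Set G), ((φ x - φ (s * x) : ℝ) : ℂ) • δ (s * x) ∧
    ∑' x : ((y : G) • (L : Set G) : Set G), |φ x - φ (s * x)| ^ 2 ≤
      (((F ∆ F.image (· * s)).card : ℝ) / (F.card : ℝ)) := by
  have hfin : (Function.support
      fun x : (y • (L : Set G) : Set G) => φ x - φ (s * x)).Finite := by
    have h := finite_support_phi K F φ hφ
    have h2 : ((fun x => s * x) ⁻¹' Function.support φ).Finite :=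
      h.preimage (mul_right_injective s).injOn
    refine ((h.union h2).preimage Subtype.val_injective.injOn).subset ?_
    intro x hx
    by_contra hn
    simp only [Set.mem_preimage, Set.mem_union, Function.mem_support, not_or, not_not] at hn
    exact hx (by simp [hn.1, hn.2])
  have hzero : ∀ x ∉ hfin.toFinset, φ x - φ (s * x) = 0 := by
    intro x hx
    simpa using hx
  constructor
  · rw [tsum_eq_sum (s := hfin.toFinset) (fun x hx => by rw [hzero x hx]; simp)]
    ext z
    have hz : s⁻¹ * z ∈ (y • (L : Set G) : Set G) ↔ (s * y)⁻¹ * z ∈ L := by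
      rw [Set.mem_smul_set_iff_inv_smul_mem, smul_eq_mul, SetLike.mem_coe, mul_inv_rev, mul_assoc]
    rw [hlam, hξ, lp.coeFn_add, Pi.add_apply, hξ, lp.coeFn_sum, Finset.sum_apply]
    simp only [lp.coeFn_smul, Pi.smul_apply, hδ, smul_eq_mul]
    rw [← mul_assoc, ← mul_inv_rev]
    by_cases h : (s * y)⁻¹ * z ∈ L
    · rw [if_pos h, if_pos h, Finset.sum_eq_single ⟨s⁻¹ * z, hz.2 h⟩]
      · simp
      · intro b _ hb
        rw [if_neg, mul_zero]
        rintro rfl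
        exact hb (Subtype.ext (by simp))
      · intro hx
        rw [hzero _ hx]
        simp
    · rw [if_neg h, if_neg h, Finset.sum_eq_zero, zero_add]
      intro b _
      rw [if_neg, mul_zero]
      rintro rfl
      exact h (hz.1 (by simp))
  · rw [tsum_eq_sum (s := hfin.toFinset) (fun x hx => by rw [hzero x hx]; simp)]
    refine (Finset.sum_le_sum fun (x : (y • (L : Set G) : Set G)) _ =>
      abs_phi_sub_sq_le K F φ hφ s (x : G)).trans ?_
    rw [← Finset.sum_div]
    gcongr
    exact_mod_cast sum_card_inter_le L K htiling (F ∆ F.image (· * s)) y hfin.toFinset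
end

section
/- The operator P = Σ_{y ∈ K} P_{yL} on ℓ²(G) is a self-adjoint idempotent (an orthogonal projection), and its rank (the dimension of its range) equals |K|. -/
open scoped InnerProductSpace Pointwise Classical

/-!
The operator `P` is the orthogonal projection onto the span of the vectors `ξ y`, `y ∈ K`, as soon
as these are orthonormal (`sum_rankOne_of_orthonormal`).

Vectors attached to distinct cosets have disjoint supports, hence are orthogonal. For the norm,
count in two ways: `|K ∩ F x|` is the number of `f ∈ F` with `f x ∈ K` (`card_inter_translate`), so
`‖ξ g‖² = |F|⁻¹ ∑_{f ∈ F} #{x ∈ g L | f x ∈ K}`. Substituting `k = f x`, the inner count is the number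
of elements of `K` in the coset `f g L`, and the tiling says that this is one
(`existsUnique_translate_mem`).
-/

/-- Finitely many orthonormal vectors `e i` yield a self-adjoint idempotent `∑ i, ⟪e i, ·⟫ e i`
whose range is their span, hence of rank the number of vectors. -/
theorem sum_rankOne_of_orthonormal {ι E : Type*} [Fintype ι] [NormedAddCommGroup E]
    [InnerProductSpace ℂ E] [CompleteSpace E] {e : ι → E} (he : Orthonormal ℂ e)
    (P : E →L[ℂ] E) (hP : ∀ v, P v = ∑ i, ⟪e i, v⟫_ℂ • e i) :
    IsSelfAdjoint P ∧ P ∘L P = P ∧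
      Module.finrank ℂ (LinearMap.range (P : E →ₗ[ℂ] E)) = Fintype.card ι := by
  have hfix : ∀ i, P (e i) = e i := by
    intro i
    rw [hP, Finset.sum_eq_single i]
    · simp [he.1 i]
    · intro j _ hj
      simp [he.2 hj]
    · simp
  refine ⟨?_, ?_, ?_⟩
  · rw [ContinuousLinearMap.isSelfAdjoint_iff_isSymmetric]
    intro v w
    simp only [ContinuousLinearMap.coe_coe, hP, sum_inner, inner_sum, inner_smul_left,
      inner_smul_right, inner_conj_symm]
    exact Finset.sum_congr rfl fun i _ => mul_comm _ _
  · ext v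
    rw [ContinuousLinearMap.comp_apply, hP v, map_sum]
    exact Finset.sum_congr rfl fun i _ => by rw [map_smul, hfix]
  · have hrange : LinearMap.range (P : E →ₗ[ℂ] E) = Submodule.span ℂ (Set.range e) := by
      apply le_antisymm
      · rintro _ ⟨v, rfl⟩
        rw [ContinuousLinearMap.coe_coe, hP]
        exact Submodule.sum_mem _ fun i _ =>
          Submodule.smul_mem _ _ (Submodule.subset_span ⟨i, rfl⟩)
      · rw [Submodule.span_le]
        rintro _ ⟨i, rfl⟩
        exact ⟨e i, hfix i⟩
    rw [hrange, finrank_span_eq_card he.linearIndependent]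

/-- The size of `K ∩ F x` counts the `f ∈ F` with `f x ∈ K`, right translation being injective. -/
theorem card_inter_translate {G : Type*} [Group G] (K F : Finset G) (x : G) :
    (K ∩ F.image (· * x)).card = (F.filter (fun f => f * x ∈ K)).card := by
  rw [← Finset.card_image_of_injective (F.filter _) (mul_left_injective x)]
  congr 1
  ext k
  simp only [Finset.mem_inter, Finset.mem_image, Finset.mem_filter]
  constructor
  · rintro ⟨hk, f, hf, rfl⟩
    exact ⟨f, ⟨hf, hk⟩, rfl⟩
  · rintro ⟨f, ⟨hf, hk⟩, rfl⟩
    exact ⟨hk, f, hf, rfl⟩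

/-- In a tiling `G = K L`, the coset `f g L` meets `K` in a single point. -/
theorem existsUnique_translate_mem {G : Type*} [Group G] (L : Subgroup G) (K : Finset G)
    (htiling : ∀ g : G, ∃! kl : G × G, kl.1 ∈ K ∧ kl.2 ∈ L ∧ g = kl.1 * kl.2) (f g : G) :
    ∃! x : G, g⁻¹ * x ∈ L ∧ f * x ∈ K := by
  obtain ⟨⟨k, l⟩, ⟨hk, hl, hkl⟩, huniq⟩ := htiling (f * g)
  dsimp only at hk hl hkl
  refine ⟨f⁻¹ * k, ⟨?_, by simpa using hk⟩, ?_⟩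
  · have : g⁻¹ * (f⁻¹ * k) = l⁻¹ := by
      rw [← mul_assoc, ← mul_inv_rev, hkl]
      group
    rw [this]
    exact L.inv_mem hl
  · rintro x ⟨hx, hfx⟩
    have := huniq (f * x, (g⁻¹ * x)⁻¹) ⟨hfx, L.inv_mem hx, by dsimp only; group⟩
    rw [← (Prod.mk.inj this).1]
    group

/-- Given a tiling `G = K L`, a finite nonempty `F ⊆ G`, `φ(x) = √(|K ∩ Fx| / |F|)`,
`ξ_{gL}(x) = φ(x)` for `x ∈ gL` and `0` otherwise, the operator
`P = Σ_{y ∈ K} P_{yL}`, where `P_{yL} η = ⟨η, ξ_{yL}⟩ ξ_{yL}`, is a self-adjoint idempotent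
whose rank equals `|K|`. -/
theorem proj_selfAdjoint_idempotent_rank
    {G : Type*} [Group G] (L : Subgroup G) (K : Finset G)
    (htiling : ∀ g : G, ∃! kl : G × G, kl.1 ∈ K ∧ kl.2 ∈ L ∧ g = kl.1 * kl.2)
    (F : Finset G) (hF : F.Nonempty)
    (φ : G → ℝ)
    (hφ : ∀ x : G, φ x = Real.sqrt (((K ∩ F.image (· * x)).card : ℝ) / (F.card : ℝ)))
    (ξ : G → lp (fun _ : G => ℂ) 2)
    (hξ : ∀ g x : G, ξ g x = if g⁻¹ * x ∈ L then (φ x : ℂ) else 0)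
    (P : lp (fun _ : G => ℂ) 2 →L[ℂ] lp (fun _ : G => ℂ) 2)
    (hP : P = ∑ y ∈ K, (innerSL ℂ (ξ y)).smulRight (ξ y)) :
    IsSelfAdjoint P ∧ P ∘L P = P ∧
      Module.finrank ℂ (LinearMap.range (P : lp (fun _ : G => ℂ) 2 →ₗ[ℂ] lp (fun _ : G => ℂ) 2))
        = K.card := by
  have hF0 : (F.card : ℝ) ≠ 0 := by exact_mod_cast hF.card_pos.ne'
  have hsq : ∀ g x : G, ⟪ξ g x, ξ g x⟫_ℂ =
      ∑ f ∈ F, if g⁻¹ * x ∈ L ∧ f * x ∈ K then ((F.card : ℂ))⁻¹ else 0 := by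
    intro g x
    rw [hξ]
    by_cases hx : g⁻¹ * x ∈ L
    · have h1 : φ x ^ 2 = ((F.filter (fun f => f * x ∈ K)).card : ℝ) / F.card := by
        rw [hφ, Real.sq_sqrt (by positivity), card_inter_translate]
      simp only [hx, if_true, true_and]
      rw [inner_self_eq_norm_sq_to_K, Complex.norm_real, ← Finset.sum_filter, Finset.sum_const,
        nsmul_eq_mul, Real.norm_eq_abs, ← div_eq_mul_inv]
      have h2 := congrArg (fun r : ℝ => (r : ℂ)) ((sq_abs (φ x)).trans h1)
      push_cast at h2
      exact h2
    · simp [hx]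
  have hself : ∀ g : G, ⟪ξ g, ξ g⟫_ℂ = 1 := by
    intro g
    have h1 : HasSum (fun x => ⟪ξ g x, ξ g x⟫_ℂ) (∑ f ∈ F, ((F.card : ℂ))⁻¹) := by
      simp only [hsq]
      refine hasSum_sum fun f _ => ?_
      obtain ⟨x₀, hx₀, huniq⟩ := existsUnique_translate_mem L K htiling f g
      have := hasSum_single (f := fun x => if g⁻¹ * x ∈ L ∧ f * x ∈ K then ((F.card : ℂ))⁻¹ else 0)
        x₀ fun x hx => if_neg fun h => hx (huniq x h)
      simpa only [if_pos hx₀] using this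
    rw [(lp.hasSum_inner (ξ g) (ξ g)).unique h1, Finset.sum_const, nsmul_eq_mul]
    exact mul_inv_cancel₀ (by exact_mod_cast hF0)
  have horth : Orthonormal ℂ (fun y : K => ξ y) := by
    refine ⟨fun y => ?_, fun y z hyz => ?_⟩
    · have h' : ‖ξ y‖ ^ 2 = 1 := by
        rw [@norm_sq_eq_re_inner ℂ, hself]
        simp
      exact (pow_eq_one_iff_of_nonneg (norm_nonneg _) two_ne_zero).1 h'
    · -- A common point `x` of `y L` and `z L` would have the two factorizations
      -- `y (y⁻¹ x)` and `z (z⁻¹ x)`.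
      change ⟪ξ y, ξ z⟫_ℂ = 0
      rw [lp.inner_eq_tsum, ← tsum_zero (α := ℂ) (β := G)]
      refine tsum_congr fun x => ?_
      rw [hξ, hξ]
      by_cases hy : (y : G)⁻¹ * x ∈ L
      · by_cases hz : (z : G)⁻¹ * x ∈ L
        · have := (htiling x).unique (y₁ := ((y : G), (y : G)⁻¹ * x))
            (y₂ := ((z : G), (z : G)⁻¹ * x)) ⟨y.2, hy, by simp⟩ ⟨z.2, hz, by simp⟩
          exact absurd (Subtype.ext (Prod.mk.inj this).1) hyz
        · simp [hz]
      · simp [hy]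
  have key := sum_rankOne_of_orthonormal horth P fun v => by
    rw [hP, ← Finset.sum_coe_sort]
    simp
  simpa only [Fintype.card_coe] using key
end

section
/- Suppose (F_n) is a Følner sequence for the countable group G, (L_n) are subgroups, and (K_n) are finite subsets with F_n ⊆ K_n such that for each n every g ∈ G is uniquely a product of an element of K_n and an element of L_n. Let P_n = Σ_{y ∈ K_n} P_{yL_n} be the associated projections on ℓ²(G) (built from F_n, K_n, L_n). Then P_n → I in the strong operator topology: ‖P_n ζ − ζ‖ → 0 as n → ∞ for every ζ ∈ ℓ²(G). -/
/-!
Fix `n` and write `φ`, `ξ_y`, `P` for the objects at stage `n`. Because `K` is a transversal for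
the left cosets of `L`, each of the translates `f y L` with `f ∈ F` meets `K` exactly once; counting
the pairs `(f, x)` with `f ∈ F`, `x ∈ y L`, `f x ∈ K` gives `‖ξ_y‖ = 1` (`hasSum_coset_card`).
Distinct `y ∈ K` give disjoint supports, so `(ξ_y)` is orthonormal and `P` is an orthogonal
projection, whence `‖P ζ - ζ‖² = ‖ζ‖² - Σ ‖⟪ξ_y, ζ⟫‖²` (`norm_proj_sub_sq`).

For `ζ = δ_z` this is at most `1 - φ(z)² = 1 - |K ∩ F z| / |F| ≤ |F ∆ F z| / |F|`, using `F ⊆ K`, and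
the right-hand side tends to `0` by the Følner condition. The same identity shows that `P - 1` is a
contraction, so convergence passes to the closed span of the `δ_z`, which is all of `ℓ²(G)`
(`tendsto_of_single`).
-/

open Filter
open scoped InnerProductSpace Pointwise Classical symmDiff

/-- Pythagoras for the projection onto the span of a finite orthonormal family. -/
lemma norm_proj_sub_sq {ι E : Type*} [NormedAddCommGroup E] [InnerProductSpace ℂ E]
    (s : Finset ι) (v : ι → E)
    (h : ∀ i ∈ s, ∀ j ∈ s, ⟪v i, v j⟫_ℂ = if i = j then 1 else 0) (x : E) :
    ‖(∑ i ∈ s, ⟪v i, x⟫_ℂ • v i) - x‖ ^ 2 = ‖x‖ ^ 2 - ∑ i ∈ s, ‖⟪v i, x⟫_ℂ‖ ^ 2 := by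
  set u := ∑ i ∈ s, ⟪v i, x⟫_ℂ • v i with hu
  have h1 : ∀ j ∈ s, ⟪v j, u⟫_ℂ = ⟪v j, x⟫_ℂ := by
    intro j hj
    rw [hu, inner_sum, Finset.sum_eq_single_of_mem j hj]
    · rw [inner_smul_right, h j hj j hj]; simp
    · intro b hb hbj
      rw [inner_smul_right, h j hj b hb, if_neg (Ne.symm hbj)]; simp
  have h2 : ∀ w : E, (∀ j ∈ s, ⟪v j, w⟫_ℂ = ⟪v j, x⟫_ℂ) →
      ⟪u, w⟫_ℂ = ((∑ i ∈ s, ‖⟪v i, x⟫_ℂ‖ ^ 2 : ℝ) : ℂ) := by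
    intro w hw
    rw [hu, sum_inner, Complex.ofReal_sum]
    refine Finset.sum_congr rfl fun j hj => ?_
    rw [inner_smul_left, hw j hj, Complex.conj_mul']
    push_cast; rfl
  have h3 : ‖u‖ ^ 2 = ∑ i ∈ s, ‖⟪v i, x⟫_ℂ‖ ^ 2 := by
    rw [@norm_sq_eq_re_inner ℂ, h2 u h1]
    simp only [RCLike.re_to_complex, Complex.ofReal_re]
  rw [@norm_sub_sq ℂ, h2 x (fun _ _ => rfl), h3]
  simp only [RCLike.re_to_complex, Complex.ofReal_re]
  ring

/-- Contractions of `ℓ²(G)` converging to `0` on the standard basis converge strongly to `0`. -/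
lemma tendsto_of_single {G : Type*}
    (T : ℕ → (lp (fun _ : G => ℂ) 2 →L[ℂ] lp (fun _ : G => ℂ) 2))
    (hT : ∀ n ζ, ‖T n ζ‖ ≤ ‖ζ‖)
    (h0 : ∀ z : G, Tendsto (fun n => T n (lp.single 2 z (1 : ℂ))) atTop (nhds 0))
    (ζ : lp (fun _ : G => ℂ) 2) : Tendsto (fun n => T n ζ) atTop (nhds 0) := by
  have hsum : ∀ s : Finset G, Tendsto (fun n => T n (∑ i ∈ s, lp.single 2 i (ζ i)))
      atTop (nhds 0) := by
    intro s
    have hs : ∀ i, (lp.single 2 i (ζ i) : lp (fun _ : G => ℂ) 2)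
        = (ζ i) • lp.single 2 i (1 : ℂ) := by
      intro i
      rw [← lp.single_smul]; simp
    simp only [map_sum, hs, map_smul]
    simpa using tendsto_finsetSum s fun i _ => (h0 i).const_smul (ζ i)
  rw [Metric.tendsto_atTop]
  intro ε hε
  have hd := lp.hasSum_single (p := 2) (by norm_num) ζ
  obtain ⟨s, hs⟩ := ((Metric.tendsto_nhds.1 hd) (ε / 2) (half_pos hε)).exists
  obtain ⟨N, hN⟩ := Metric.tendsto_atTop.1 (hsum s) (ε / 2) (half_pos hε)
  refine ⟨N, fun n hn => ?_⟩
  have h1 := hN n hn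
  set η := ∑ i ∈ s, (lp.single 2 i (ζ i) : lp (fun _ : G => ℂ) 2)
  rw [dist_zero_right] at h1 ⊢
  rw [dist_comm, dist_eq_norm] at hs
  have h2 := hT n (ζ - η)
  calc ‖T n ζ‖ = ‖T n (ζ - η) + T n η‖ := by rw [← map_add, sub_add_cancel]
    _ ≤ ‖T n (ζ - η)‖ + ‖T n η‖ := norm_add_le _ _
    _ < ε := by linarith

/-- Summed over a coset `y L`, the counts `|K ∩ F x|` total `|F|`: each `f ∈ F` contributes the
single point of `K ∩ f y L`. -/
lemma hasSum_coset_card {G : Type*} [Group G] (F K : Finset G) (L : Subgroup G)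
    (ht : ∀ g : G, ∃! kl : G × G, kl.1 ∈ K ∧ kl.2 ∈ L ∧ g = kl.1 * kl.2) (y : G) :
    HasSum (fun x => if y⁻¹ * x ∈ L then ((K ∩ F.image (· * x)).card : ℝ) else 0)
      (F.card : ℝ) := by
  have hf : ∀ f ∈ F, HasSum (fun x => if y⁻¹ * x ∈ L ∧ f * x ∈ K then (1 : ℝ) else 0) 1 := by
    intro f _
    -- `x = f⁻¹ * k` is the only point of `y L` with `f * x ∈ K`.
    obtain ⟨⟨k, l⟩, ⟨hk, hl, he⟩, hu⟩ := ht (f * y)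
    simp only at hk hl he
    have hy : y = f⁻¹ * k * l := by rw [mul_assoc, ← he]; group
    have hval : (if y⁻¹ * (f⁻¹ * k) ∈ L ∧ f * (f⁻¹ * k) ∈ K then (1 : ℝ) else 0) = 1 := by
      rw [if_pos]
      refine ⟨?_, by simpa using hk⟩
      have : y⁻¹ * (f⁻¹ * k) = l⁻¹ := by rw [hy]; group
      rw [this]; exact L.inv_mem hl
    have := hasSum_single
      (f := fun x => if y⁻¹ * x ∈ L ∧ f * x ∈ K then (1 : ℝ) else 0) (f⁻¹ * k) (by
        intro x hx
        refine if_neg fun ⟨h1, h2⟩ => hx ?_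
        have hk' : f * x = k :=
          congrArg Prod.fst (hu (f * x, x⁻¹ * y) ⟨h2, by simpa using L.inv_mem h1, by group⟩)
        rw [← hk']; group)
    rwa [hval] at this
  have := hasSum_sum hf
  simp only [Finset.sum_const, nsmul_eq_mul, mul_one] at this
  convert this using 2 with x
  by_cases hx : y⁻¹ * x ∈ L
  · simp only [hx, if_true, true_and]
    rw [Finset.sum_boole]
    congr 1
    have : K ∩ F.image (· * x) = (F.filter fun f => f * x ∈ K).image (· * x) := by
      ext a
      simp only [Finset.mem_inter, Finset.mem_image, Finset.mem_filter]
      constructor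
      · rintro ⟨ha, f, hf, rfl⟩; exact ⟨f, ⟨hf, ha⟩, rfl⟩
      · rintro ⟨f, ⟨hf, ha⟩, rfl⟩; exact ⟨ha, f, hf, rfl⟩
    rw [this, Finset.card_image_of_injective _ (mul_left_injective x)]
  · simp [hx]

/-- Given a Følner sequence `F n` for a countable group `G`, subgroups `L n` and finite sets
`K n ⊇ F n` with tilings `G = K n · L n`, the associated projections
`P n = Σ_{y ∈ K n} P_{y L n}` on `ℓ²(G)` converge to the identity in the strong operator
topology. -/
theorem proj_tendsto_id_SOT
    {G : Type*} [Group G] [Countable G]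
    (F K : ℕ → Finset G) (L : ℕ → Subgroup G)
    -- Følner sequence conditions:
    (hne : ∀ n, (F n).Nonempty)
    (hmem : ∀ g : G, ∀ᶠ n in atTop, g ∈ F n)
    (hfolner : ∀ s : G, Tendsto
      (fun n => ((((F n) ∆ ((F n).image (· * s))).card : ℝ) / ((F n).card : ℝ)))
      atTop (nhds 0))
    -- tilings:
    (hFK : ∀ n, F n ⊆ K n)
    (htiling : ∀ n, ∀ g : G, ∃! kl : G × G, kl.1 ∈ K n ∧ kl.2 ∈ L n ∧ g = kl.1 * kl.2)
    -- the functions φ_n, the vectors ξ_{y L n}, and the projections P n: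
    (φ : ℕ → G → ℝ)
    (hφ : ∀ n, ∀ x : G, φ n x =
      Real.sqrt (((K n ∩ (F n).image (· * x)).card : ℝ) / ((F n).card : ℝ)))
    (ξ : ℕ → G → lp (fun _ : G => ℂ) 2)
    (hξ : ∀ n, ∀ g x : G, ξ n g x = if g⁻¹ * x ∈ L n then (φ n x : ℂ) else 0)
    (P : ℕ → (lp (fun _ : G => ℂ) 2 →L[ℂ] lp (fun _ : G => ℂ) 2))
    (hP : ∀ n, P n = ∑ y ∈ K n, (innerSL ℂ (ξ n y)).smulRight (ξ n y)) :
    ∀ ζ : lp (fun _ : G => ℂ) 2,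
      Tendsto (fun n => ‖P n ζ - ζ‖) atTop (nhds 0) := by
  have hF0 : ∀ n, (0 : ℝ) < (F n).card := fun n => by exact_mod_cast (hne n).card_pos
  have hφsq : ∀ n x, φ n x ^ 2 =
      ((K n ∩ (F n).image (· * x)).card : ℝ) / ((F n).card : ℝ) := fun n x => by
    rw [hφ, Real.sq_sqrt (by positivity)]
  have horth : ∀ n, ∀ i ∈ K n, ∀ j ∈ K n, ⟪ξ n i, ξ n j⟫_ℂ = if i = j then 1 else 0 := by
    intro n i hi j hj
    have hs := lp.hasSum_inner (𝕜 := ℂ) (ξ n i) (ξ n j)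
    split_ifs with hij
    · subst hij
      refine hs.unique ?_
      have h1 := ((hasSum_coset_card (F n) (K n) (L n) (htiling n) i).div_const
        ((F n).card : ℝ))
      rw [div_self (hF0 n).ne'] at h1
      have h2 := Complex.hasSum_ofReal.2 h1
      rw [Complex.ofReal_one] at h2
      refine (congrArg (HasSum · (1 : ℂ)) (funext fun x => ?_)).mpr h2
      rw [hξ]
      split_ifs with hx
      · rw [← hφsq, inner_self_eq_norm_sq_to_K]
        simp [← Complex.ofReal_pow]
      · simp
    · refine hs.unique ?_
      convert hasSum_zero using 2 with x
      rw [hξ, hξ]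
      split_ifs with h1 h2
      · -- `x` would lie in both cosets `i L` and `j L`, giving two factorizations of `x`.
        exfalso
        obtain ⟨kl, -, hu⟩ := htiling n x
        have a := hu (i, i⁻¹ * x) ⟨hi, h1, by group⟩
        have b := hu (j, j⁻¹ * x) ⟨hj, h2, by group⟩
        exact hij (Prod.ext_iff.1 (a.trans b.symm)).1
      all_goals simp
  have hPy : ∀ n ζ, ‖P n ζ - ζ‖ ^ 2 = ‖ζ‖ ^ 2 - ∑ y ∈ K n, ‖⟪ξ n y, ζ⟫_ℂ‖ ^ 2 := by
    intro n ζ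
    rw [← norm_proj_sub_sq (K n) (ξ n) (horth n) ζ, hP]
    simp
  intro ζ
  have key := tendsto_of_single (fun n => P n - ContinuousLinearMap.id ℂ _) ?_ ?_ ζ
  · simpa using key.norm
  · intro n ζ
    refine le_of_sq_le_sq ?_ (norm_nonneg _)
    have := hPy n ζ
    have h2 : 0 ≤ ∑ y ∈ K n, ‖⟪ξ n y, ζ⟫_ℂ‖ ^ 2 := Finset.sum_nonneg fun _ _ => by positivity
    simp only [sub_apply, ContinuousLinearMap.id_apply]
    linarith
  · intro z
    rw [tendsto_zero_iff_norm_tendsto_zero]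
    have hb : ∀ n, ‖P n (lp.single 2 z (1 : ℂ)) - lp.single 2 z (1 : ℂ)‖ ^ 2 ≤
        (((F n) ∆ ((F n).image (· * z))).card : ℝ) / ((F n).card : ℝ) := by
      intro n
      rw [hPy]
      -- `k` represents the coset of `z`: among the `ξ n y`, only `ξ n k` can see `δ_z`.
      obtain ⟨⟨k, l⟩, ⟨hk, hl, he⟩, -⟩ := htiling n z
      simp only at hk hl he
      have hin : ‖⟪ξ n k, lp.single 2 z (1 : ℂ)⟫_ℂ‖ ^ 2 = φ n z ^ 2 := by
        rw [lp.inner_single_right, hξ, if_pos (by rw [he]; simpa using hl)]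
        simp
      have h1 : φ n z ^ 2 ≤ ∑ y ∈ K n, ‖⟪ξ n y, lp.single 2 z (1 : ℂ)⟫_ℂ‖ ^ 2 := by
        rw [← hin]
        exact Finset.single_le_sum (f := fun y => ‖⟪ξ n y, lp.single 2 z (1 : ℂ)⟫_ℂ‖ ^ 2)
          (fun _ _ => by positivity) hk
      have h2 : ‖(lp.single 2 z (1 : ℂ) : lp (fun _ : G => ℂ) 2)‖ = 1 := by
        rw [lp.norm_single (by norm_num)]; simp
      have h3 : (F n).card ≤ ((F n) ∆ ((F n).image (· * z))).card +
          (K n ∩ (F n).image (· * z)).card := by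
        refine le_trans (Finset.card_le_card ?_) (Finset.card_union_le _ _)
        intro a ha
        by_cases hz : a ∈ (F n).image (· * z)
        · exact Finset.mem_union_right _ (Finset.mem_inter.2 ⟨hFK n ha, hz⟩)
        · exact Finset.mem_union_left _ (Finset.mem_symmDiff.2 (Or.inl ⟨ha, hz⟩))
      have h4 : (1 : ℝ) ≤ (((F n) ∆ ((F n).image (· * z))).card : ℝ) / ((F n).card : ℝ) +
          φ n z ^ 2 := by
        rw [hφsq, ← add_div, le_div_iff₀ (hF0 n), one_mul]
        exact_mod_cast h3
      rw [h2]
      linarith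
    have hsq := squeeze_zero (fun n => sq_nonneg _) hb (hfolner z)
    have := hsq.sqrt
    simpa using this
end

section
/- The presented group ⟨s, t | [[s,t],s], [[s,t],t]⟩ (two generators s, t with relators [[s,t],s] and [[s,t],t], where [a,b] = a⁻¹b⁻¹ab) is isomorphic to the integer Heisenberg group H of 3×3 upper unitriangular integer matrices, via an isomorphism sending s to the matrix with rows (1,1,0),(0,1,0),(0,0,1) and t to the matrix with rows (1,0,0),(0,1,1),(0,0,1). -/
/-!
In any group in which `u = [s,t]` commutes with `s` and `t`, one has
`s ^ a * t ^ b = t ^ b * s ^ a * u ^ (a * b)` (`zpow_mul_zpow_of_cmt`). This is the same rule by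
which the matrix entries multiply: writing `(a, b, c)` for the entries in positions
`(0,1), (1,2), (0,2)`, we have `(a, b, c) * (a', b', c') = (a + a', b + b', c + c' + a * b')`.
Hence `(a, b, c) ↦ t ^ b * s ^ a * u ^ c` is a homomorphism (`Heisenberg.liftHom`) from the
matrix group to any such group, in particular to the presented group. It is inverse to the
homomorphism given by the presentation: one composite fixes the two generators, and the other
is the identity because the matrix `(a, b, c)` equals `t ^ b * s ^ a * u ^ c` in the matrix group.
-/

set_option linter.unnecessarySeqFocus false

/-- A 3×3 integer matrix is upper unitriangular. -/
def IsUnitriangular (M : Matrix (Fin 3) (Fin 3) ℤ) : Prop :=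
  M 0 0 = 1 ∧ M 1 1 = 1 ∧ M 2 2 = 1 ∧ M 1 0 = 0 ∧ M 2 0 = 0 ∧ M 2 1 = 0

/-- The integer Heisenberg group: 3×3 upper unitriangular integer matrices under matrix
multiplication. -/
def Heisenberg : Type := {M : Matrix (Fin 3) (Fin 3) ℤ // IsUnitriangular M}

namespace Heisenberg

instance : Group Heisenberg where
  mul A B := ⟨A.1 * B.1, by
    obtain ⟨a1, a2, a3, a4, a5, a6⟩ := A.2
    obtain ⟨b1, b2, b3, b4, b5, b6⟩ := B.2
    refine ⟨?_, ?_, ?_, ?_, ?_, ?_⟩ <;>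
      simp [Matrix.mul_apply, Fin.sum_univ_three, a1, a2, a3, a4, a5, a6,
        b1, b2, b3, b4, b5, b6]⟩
  one := ⟨1, by refine ⟨?_, ?_, ?_, ?_, ?_, ?_⟩ <;> simp [Matrix.one_apply]⟩
  inv A := ⟨!![1, -(A.1 0 1), A.1 0 1 * A.1 1 2 - A.1 0 2;
               0, 1, -(A.1 1 2);
               0, 0, 1], by
    refine ⟨?_, ?_, ?_, ?_, ?_, ?_⟩ <;> rfl⟩
  mul_assoc A B C := Subtype.ext (Matrix.mul_assoc A.1 B.1 C.1)
  one_mul A := Subtype.ext (Matrix.one_mul A.1)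
  mul_one A := Subtype.ext (Matrix.mul_one A.1)
  inv_mul_cancel A := by
    obtain ⟨M, a1, a2, a3, a4, a5, a6⟩ := A
    apply Subtype.ext
    show _ * M = (1 : Matrix (Fin 3) (Fin 3) ℤ)
    ext i j
    fin_cases i <;> fin_cases j <;>
      simp [Matrix.mul_apply, Fin.sum_univ_three, Matrix.one_apply,
        a1, a2, a3, a4, a5, a6] <;> ring

/-- The generator `s` of the integer Heisenberg group. -/
def s : Heisenberg :=
  ⟨!![1, 1, 0; 0, 1, 0; 0, 0, 1], by refine ⟨?_, ?_, ?_, ?_, ?_, ?_⟩ <;> rfl⟩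

/-- The generator `t` of the integer Heisenberg group. -/
def t : Heisenberg :=
  ⟨!![1, 0, 0; 0, 1, 1; 0, 0, 1], by refine ⟨?_, ?_, ?_, ?_, ?_, ?_⟩ <;> rfl⟩

/-- The element `u = [s,t] = s⁻¹t⁻¹st` of the integer Heisenberg group. -/
def u : Heisenberg :=
  ⟨!![1, 0, 1; 0, 1, 0; 0, 0, 1], by refine ⟨?_, ?_, ?_, ?_, ?_, ?_⟩ <;> rfl⟩

end Heisenberg

/-- The commutator `[a,b] = a⁻¹b⁻¹ab`. -/
def cmt {G : Type*} [Group G] (a b : G) : G := a⁻¹ * b⁻¹ * a * b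

/-- The relators `[[s,t],s]` and `[[s,t],t]` of the integer Heisenberg group, as elements of
the free group on two generators. -/
def heisenbergRels : Set (FreeGroup (Fin 2)) :=
  {cmt (cmt (FreeGroup.of 0) (FreeGroup.of 1)) (FreeGroup.of 0),
   cmt (cmt (FreeGroup.of 0) (FreeGroup.of 1)) (FreeGroup.of 1)}

/-- Collection formula in a group where `[x,y]` is central in the subgroup generated by
`x` and `y`. Starting from `x * y = y * (x * [x,y])`, conjugating `x ^ a` by `y` gives
`x ^ a * y = y * x ^ a * [x,y] ^ a`, and conjugating `y ^ b` by `x ^ a` then gives the formula. -/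
theorem zpow_mul_zpow_of_cmt {G : Type*} [Group G] {x y : G}
    (hx : Commute (cmt x y) x) (hy : Commute (cmt x y) y) (a b : ℤ) :
    x ^ a * y ^ b = y ^ b * x ^ a * cmt x y ^ (a * b) := by
  have h1 : SemiconjBy y (x * cmt x y) x := by
    simp only [SemiconjBy, cmt]; group
  have h2 : y * (x ^ a * cmt x y ^ a) = x ^ a * y := by
    have := h1.zpow_right a
    rwa [hx.symm.mul_zpow] at this
  have h3 : SemiconjBy (x ^ a) y (y * cmt x y ^ a) := by
    rw [SemiconjBy, ← h2, mul_assoc, (hx.zpow_zpow a a).eq]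
  have h4 := (h3.zpow_right b).eq
  rw [(hy.zpow_left a).symm.mul_zpow, ← zpow_mul] at h4
  rw [h4, mul_assoc, (hx.zpow_zpow (a * b) a).eq, mul_assoc]

theorem cmt_eq_one_iff {G : Type*} [Group G] {x y : G} : cmt x y = 1 ↔ Commute x y := by
  rw [cmt, mul_assoc, ← mul_inv_rev, inv_mul_eq_one, eq_comm, Commute, SemiconjBy]

namespace Heisenberg

@[ext]
theorem ext' {A B : Heisenberg} (h1 : A.1 0 1 = B.1 0 1) (h2 : A.1 1 2 = B.1 1 2)
    (h3 : A.1 0 2 = B.1 0 2) : A = B := by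
  obtain ⟨M, a1, a2, a3, a4, a5, a6⟩ := A
  obtain ⟨N, b1, b2, b3, b4, b5, b6⟩ := B
  apply Subtype.ext
  ext i j
  fin_cases i <;> fin_cases j <;> simp_all

theorem mul_01 (A B : Heisenberg) : (A * B).1 0 1 = A.1 0 1 + B.1 0 1 := by
  obtain ⟨a1, a2, a3, a4, a5, a6⟩ := A.2
  obtain ⟨b1, b2, b3, b4, b5, b6⟩ := B.2
  change (A.1 * B.1) 0 1 = _
  simp [Matrix.mul_apply, Fin.sum_univ_three, *, add_comm]

theorem mul_12 (A B : Heisenberg) : (A * B).1 1 2 = A.1 1 2 + B.1 1 2 := by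
  obtain ⟨a1, a2, a3, a4, a5, a6⟩ := A.2
  obtain ⟨b1, b2, b3, b4, b5, b6⟩ := B.2
  change (A.1 * B.1) 1 2 = _
  simp [Matrix.mul_apply, Fin.sum_univ_three, *, add_comm]

theorem mul_02 (A B : Heisenberg) :
    (A * B).1 0 2 = A.1 0 2 + B.1 0 2 + A.1 0 1 * B.1 1 2 := by
  obtain ⟨a1, a2, a3, a4, a5, a6⟩ := A.2
  obtain ⟨b1, b2, b3, b4, b5, b6⟩ := B.2
  change (A.1 * B.1) 0 2 = _
  simp [Matrix.mul_apply, Fin.sum_univ_three, *]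
  ring

theorem inv_01 (A : Heisenberg) : A⁻¹.1 0 1 = -A.1 0 1 := rfl

theorem inv_12 (A : Heisenberg) : A⁻¹.1 1 2 = -A.1 1 2 := rfl

theorem inv_02 (A : Heisenberg) : A⁻¹.1 0 2 = A.1 0 1 * A.1 1 2 - A.1 0 2 := rfl

theorem cmt_s_t : cmt s t = u := by
  ext <;> simp only [cmt, mul_01, mul_12, mul_02, inv_01, inv_12, inv_02] <;> simp [s, t, u]

theorem commute_u (A : Heisenberg) : Commute u A := by
  rw [Commute, SemiconjBy]
  ext <;> simp only [mul_01, mul_12, mul_02] <;> simp [u, add_comm]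

theorem zpow_01 (A : Heisenberg) (n : ℤ) : (A ^ n).1 0 1 = n * A.1 0 1 := by
  induction n using Int.induction_on with
  | zero => simp only [zpow_zero, zero_mul]; rfl
  | succ k ih => rw [zpow_add_one, mul_01, ih]; ring
  | pred k ih => rw [zpow_sub_one, mul_01, ih, inv_01]; ring

theorem zpow_12 (A : Heisenberg) (n : ℤ) : (A ^ n).1 1 2 = n * A.1 1 2 := by
  induction n using Int.induction_on with
  | zero => simp only [zpow_zero, zero_mul]; rfl
  | succ k ih => rw [zpow_add_one, mul_12, ih]; ring
  | pred k ih => rw [zpow_sub_one, mul_12, ih, inv_12]; ring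

/-- The corner entry is additive on powers once one of the two superdiagonal entries vanishes,
as happens for `s`, `t` and `u`. -/
theorem zpow_02 (A : Heisenberg) (hA : A.1 0 1 * A.1 1 2 = 0) (n : ℤ) :
    (A ^ n).1 0 2 = n * A.1 0 2 := by
  induction n using Int.induction_on with
  | zero => simp only [zpow_zero, zero_mul]; rfl
  | succ k ih => rw [zpow_add_one, mul_02, ih, zpow_01, mul_assoc, hA]; ring
  | pred k ih =>
    rw [zpow_sub_one, mul_02, ih, zpow_01, inv_02, inv_12, mul_neg, mul_assoc, hA]; ring

theorem eq_zpow_mul (A : Heisenberg) :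
    t ^ A.1 1 2 * s ^ A.1 0 1 * u ^ A.1 0 2 = A := by
  have hs : s.1 0 1 * s.1 1 2 = 0 := rfl
  have ht : t.1 0 1 * t.1 1 2 = 0 := rfl
  have hu : u.1 0 1 * u.1 1 2 = 0 := rfl
  ext <;> simp only [mul_01, mul_12, mul_02, zpow_01, zpow_12, zpow_02 _ hs, zpow_02 _ ht,
    zpow_02 _ hu] <;> simp [s, t, u]

/-- The homomorphism from the Heisenberg group sending `s ↦ x` and `t ↦ y`, for elements
`x`, `y` commuting with their commutator. -/
def liftHom {G : Type*} [Group G] (x y : G)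
    (hx : Commute (cmt x y) x) (hy : Commute (cmt x y) y) : Heisenberg →* G :=
  MonoidHom.mk' (fun A => y ^ A.1 1 2 * x ^ A.1 0 1 * cmt x y ^ A.1 0 2) fun A B => by
    simp only [mul_01, mul_12, mul_02]
    generalize A.1 0 1 = a, A.1 1 2 = b, A.1 0 2 = c, B.1 0 1 = a', B.1 1 2 = b', B.1 0 2 = c'
    have h := zpow_mul_zpow_of_cmt hx hy a b'
    have hx' := fun m n : ℤ => (hx.zpow_zpow m n).eq
    have hy' := fun m n : ℤ => (hy.zpow_zpow m n).eq
    generalize cmt x y = z at *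
    calc y ^ (b + b') * x ^ (a + a') * z ^ (c + c' + a * b')
        = y ^ b * (y ^ b' * x ^ a) * (x ^ a' * z ^ (a * b')) * z ^ c * z ^ c' := by
          rw [show c + c' + a * b' = a * b' + c + c' by ring]
          simp only [zpow_add, mul_assoc]
      _ = y ^ b * (y ^ b' * x ^ a * z ^ (a * b')) * (x ^ a' * z ^ c) * z ^ c' := by
          rw [← hx']; simp only [mul_assoc]
      _ = y ^ b * x ^ a * (y ^ b' * z ^ c) * x ^ a' * z ^ c' := by
          rw [← h, ← hx']; simp only [mul_assoc]
      _ = y ^ b * x ^ a * z ^ c * (y ^ b' * x ^ a' * z ^ c') := by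
          rw [← hy']; simp only [mul_assoc]

end Heisenberg

theorem map_cmt' {G H : Type*} [Group G] [Group H] (f : G →* H) (x y : G) :
    f (cmt x y) = cmt (f x) (f y) := by
  simp [cmt]

/-- The presented group `⟨s, t | [[s,t],s], [[s,t],t]⟩` is isomorphic to the integer
Heisenberg group, via an isomorphism sending the generators to the matrices `s` and `t`. -/
theorem presentedGroup_iso_heisenberg :
    ∃ e : PresentedGroup heisenbergRels ≃* Heisenberg,
      e (PresentedGroup.of 0) = Heisenberg.s ∧ e (PresentedGroup.of 1) = Heisenberg.t := by
  have hrel : ∀ i : Fin 2, Commute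
      (cmt (PresentedGroup.of 0 : PresentedGroup heisenbergRels) (PresentedGroup.of 1))
      (PresentedGroup.of i) := by
    intro i
    have h : cmt (cmt (FreeGroup.of 0) (FreeGroup.of 1)) (FreeGroup.of i) ∈ heisenbergRels := by
      fin_cases i
      · exact Or.inl rfl
      · exact Or.inr rfl
    have h' := PresentedGroup.one_of_mem h
    rw [map_cmt', map_cmt'] at h'
    exact cmt_eq_one_iff.1 h'
  have hlift : ∀ r ∈ heisenbergRels,
      FreeGroup.lift ![Heisenberg.s, Heisenberg.t] r = 1 := by
    rintro r (rfl | rfl) <;>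
      simpa [map_cmt', Heisenberg.cmt_s_t] using
        cmt_eq_one_iff.2 (Heisenberg.commute_u _)
  let f := PresentedGroup.toGroup hlift
  let g := Heisenberg.liftHom _ _ (hrel 0) (hrel 1)
  have f0 : f (PresentedGroup.of 0) = Heisenberg.s := PresentedGroup.toGroup.of hlift
  have f1 : f (PresentedGroup.of 1) = Heisenberg.t := PresentedGroup.toGroup.of hlift
  have hgf : g.comp f = MonoidHom.id _ := by
    ext i
    fin_cases i
    · change g (f (PresentedGroup.of 0)) = PresentedGroup.of 0
      rw [f0]
      simp [g, Heisenberg.liftHom, Heisenberg.s]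
    · change g (f (PresentedGroup.of 1)) = PresentedGroup.of 1
      rw [f1]
      simp [g, Heisenberg.liftHom, Heisenberg.t]
  have hfg : f.comp g = MonoidHom.id _ := by
    refine MonoidHom.ext fun A => ?_
    simp only [g, Heisenberg.liftHom, MonoidHom.comp_apply, MonoidHom.mk'_apply, map_mul,
      map_zpow, map_cmt', f0, f1, Heisenberg.cmt_s_t, MonoidHom.id_apply]
    exact Heisenberg.eq_zpow_mul A
  exact ⟨MonoidHom.toMulEquiv f g hgf hfg, f0, f1⟩
end

section
/- For every positive integer n, the subgroup L_n = ⟨s^n, t^n, u^n⟩ of the integer Heisenberg group H is a normal subgroup of H of finite index. -/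
/-!
Write the upper unitriangular matrix with entries `a`, `b` just above the diagonal and `c` in the
corner as `mk a b c`. Since `mk a b c = t ^ b * s ^ a * u ^ c`, the matrices whose three entries
are all divisible by `n` lie in `L_n`; those are exactly the elements of the kernel of the reduction
`H → GL₃(ℤ/n)` (`reduction`). Conversely the three generators of `L_n` reduce to the identity. So
`L_n` is the kernel of a homomorphism to a finite group (`closure_eq_ker`), hence normal and of
finite index.
-/

set_option linter.unnecessarySeqFocus false

namespace Heisenberg

/-- The upper unitriangular matrix with superdiagonal `(a, b)` and upper right corner `c`. -/
def mk (a b c : ℤ) : Heisenberg :=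
  ⟨!![1, a, c; 0, 1, b; 0, 0, 1], by refine ⟨?_, ?_, ?_, ?_, ?_, ?_⟩ <;> rfl⟩

theorem eq_mk (A : Heisenberg) : A = mk (A.1 0 1) (A.1 1 2) (A.1 0 2) := by
  obtain ⟨M, a1, a2, a3, a4, a5, a6⟩ := A
  apply Subtype.ext
  ext i j
  fin_cases i <;> fin_cases j <;> simp [mk, a1, a2, a3, a4, a5, a6]

theorem mk_mul (a b c a' b' c' : ℤ) :
    mk a b c * mk a' b' c' = mk (a + a') (b + b') (c + c' + a * b') := by
  apply Subtype.ext
  change (mk a b c).1 * (mk a' b' c').1 = _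
  ext i j
  fin_cases i <;> fin_cases j <;>
    simp [mk, Matrix.mul_apply, Fin.sum_univ_three] <;> ring

theorem eq_zpow_of_map_add {G : Type*} [Group G] (f : ℤ → G)
    (hf : ∀ a b, f (a + b) = f a * f b) (k : ℤ) : f k = f 1 ^ k := by
  let F : Multiplicative ℤ →* G := MonoidHom.mk' (fun a => f a.toAdd) fun a b => hf _ _
  have h := map_zpow F (Multiplicative.ofAdd 1) k
  rw [← ofAdd_zsmul, smul_eq_mul, mul_one] at h
  exact h

theorem s_zpow (k : ℤ) : s ^ k = mk k 0 0 :=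
  (eq_zpow_of_map_add (fun k => mk k 0 0) (fun a b => by simp [mk_mul]) k).symm

theorem t_zpow (k : ℤ) : t ^ k = mk 0 k 0 :=
  (eq_zpow_of_map_add (fun k => mk 0 k 0) (fun a b => by simp [mk_mul]) k).symm

theorem u_zpow (k : ℤ) : u ^ k = mk 0 0 k :=
  (eq_zpow_of_map_add (fun k => mk 0 0 k) (fun a b => by simp [mk_mul]) k).symm

theorem mk_eq_zpow_mul (a b c : ℤ) : mk a b c = t ^ b * s ^ a * u ^ c := by
  simp [s_zpow, t_zpow, u_zpow, mk_mul]

/-- Entrywise reduction modulo `n`, as a homomorphism to the invertible matrices over `ℤ/n`. -/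
def reduction (n : ℕ) : Heisenberg →* (Matrix (Fin 3) (Fin 3) (ZMod n))ˣ :=
  MonoidHom.toHomUnits
    { toFun := fun A => (Int.castRingHom (ZMod n)).mapMatrix A.1
      map_one' := map_one (Int.castRingHom (ZMod n)).mapMatrix
      map_mul' := fun A B => map_mul (Int.castRingHom (ZMod n)).mapMatrix A.1 B.1 }

theorem mk_mem_ker (n : ℕ) (a b c : ℤ) :
    mk a b c ∈ (reduction n).ker ↔ (n : ℤ) ∣ a ∧ (n : ℤ) ∣ b ∧ (n : ℤ) ∣ c := by
  have h : mk a b c ∈ (reduction n).ker ↔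
      (Int.castRingHom (ZMod n)).mapMatrix (mk a b c).1 = 1 := by
    rw [MonoidHom.mem_ker, Units.ext_iff]; rfl
  rw [h, ← ZMod.intCast_zmod_eq_zero_iff_dvd, ← ZMod.intCast_zmod_eq_zero_iff_dvd,
    ← ZMod.intCast_zmod_eq_zero_iff_dvd, ← Matrix.ext_iff]
  simp [Fin.forall_fin_succ, mk, Matrix.one_apply]
  tauto

theorem closure_eq_ker (n : ℕ) :
    Subgroup.closure {s ^ n, t ^ n, u ^ n} = (reduction n).ker := by
  apply le_antisymm
  · rw [Subgroup.closure_le]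
    rintro x (rfl | rfl | rfl) <;>
      simp only [← zpow_natCast, s_zpow, t_zpow, u_zpow, SetLike.mem_coe, mk_mem_ker] <;> simp
  · intro A hA
    rw [eq_mk A, mk_mem_ker] at hA
    obtain ⟨⟨a, ha⟩, ⟨b, hb⟩, ⟨c, hc⟩⟩ := hA
    rw [eq_mk A, ha, hb, hc, mk_eq_zpow_mul]
    simp only [zpow_mul, zpow_natCast]
    refine mul_mem (mul_mem ?_ ?_) ?_ <;>
      exact zpow_mem (Subgroup.subset_closure (by simp)) _

end Heisenberg

/-- For every positive integer `n`, the subgroup `L_n = ⟨s^n, t^n, u^n⟩` of the integer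
Heisenberg group is normal and of finite index. -/
theorem heisenberg_subgroup_normal_finiteIndex (n : ℕ) (hn : 0 < n) :
    (Subgroup.closure {Heisenberg.s ^ n, Heisenberg.t ^ n, Heisenberg.u ^ n}).Normal ∧
    (Subgroup.closure {Heisenberg.s ^ n, Heisenberg.t ^ n, Heisenberg.u ^ n}).FiniteIndex := by
  -- `ZMod n` is finite only for nonzero `n`; `ZMod 0` is `ℤ`.
  have : NeZero n := ⟨hn.ne'⟩
  rw [Heisenberg.closure_eq_ker]
  exact ⟨inferInstance, Subgroup.finiteIndex_ker _⟩
end
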